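/- arXiv:0902.2514 — 3 statements merged into one kernel-verified Lean document; each statement's English description precedes it below -/
import Mathlib

section
/- For every real number s with 0 < s < 1 and every real number x > 0, the double inequality (x + s/2)^{1-s} < Γ(x+1)/Γ(x+s) < (x - 1/2 + √(s + 1/4))^{1-s} holds (Kershaw's first double inequality), where Γ denotes Euler's gamma function. -/
open Real

theorem tendsto_log_add_sub_log_add (a b : ℝ) :
    Filter.Tendsto (fun x : ℝ => log (x + a) - log (x + b)) Filter.atTop (nhds 0) := by
  have h := (tendsto_log_comp_add_sub_log a).sub (tendsto_log_comp_add_sub_log b)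
  simpa using h

/-- A function tending to `0` at infinity that decreases under unit shifts is positive. -/
theorem pos_of_add_one_lt_of_tendsto_zero {f : ℝ → ℝ} (hf : ∀ x, 0 < x → f (x + 1) < f x)
    (hlim : Filter.Tendsto f Filter.atTop (nhds 0)) {x : ℝ} (hx : 0 < x) : 0 < f x := by
  have hmono : ∀ n : ℕ, f (x + 1 + n) ≤ f (x + 1) := by
    intro n
    induction n with
    | zero => simp
    | succ n ih =>
      have h := hf (x + 1 + n) (by positivity)
      push_cast
      rw [← add_assoc]
      linarith
  have ht : Filter.Tendsto (fun n : ℕ => f (x + 1 + n)) Filter.atTop (nhds 0) :=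
    hlim.comp (Filter.tendsto_atTop_add_const_left _ _ tendsto_natCast_atTop_atTop)
  exact (le_of_tendsto' ht hmono).trans_lt (hf x hx)

/-- The logarithm of `Γ(x+1) / Γ(x+s) / (x+c)^(1-s)`. -/
noncomputable def logGammaRatio (s c x : ℝ) : ℝ :=
  log (Gamma (x + 1)) - log (Gamma (x + s)) - (1 - s) * log (x + c)

/-- The decrement `logGammaRatio s c x - logGammaRatio s c (x + 1)` in closed form. -/
noncomputable def logGammaRatioStep (s c x : ℝ) : ℝ :=
  (log (x + s) - log (x + 1)) + (1 - s) * (log (x + (c + 1)) - log (x + c))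

theorem logGammaRatio_sub_add_one {s c x : ℝ} (hs : 0 < s) (hx : 0 < x) :
    logGammaRatio s c x - logGammaRatio s c (x + 1) = logGammaRatioStep s c x := by
  have h1 : log (Gamma (x + 1 + 1)) = log (x + 1) + log (Gamma (x + 1)) := by
    rw [Gamma_add_one (by positivity), log_mul (by positivity) (Gamma_pos_of_pos (by positivity)).ne']
  have h2 : log (Gamma (x + 1 + s)) = log (x + s) + log (Gamma (x + s)) := by
    rw [show x + 1 + s = (x + s) + 1 by ring, Gamma_add_one (by positivity),
      log_mul (by positivity) (Gamma_pos_of_pos (by positivity)).ne']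
  have h3 : x + 1 + c = x + (c + 1) := by ring
  simp only [logGammaRatio, logGammaRatioStep, h1, h2, h3]
  ring

theorem tendsto_logGammaRatioStep (s c : ℝ) :
    Filter.Tendsto (logGammaRatioStep s c) Filter.atTop (nhds 0) := by
  have h := (tendsto_log_add_sub_log_add s 1).add
    ((tendsto_log_add_sub_log_add (c + 1) c).const_mul (1 - s))
  rwa [mul_zero, add_zero] at h

theorem log_Gamma_add_one_sub_log_Gamma_add_bounds {s x : ℝ} (hs0 : 0 < s) (hs1 : s < 1) (hx : 0 < x) :
    (1 - s) * log x ≤ log (Gamma (x + 1)) - log (Gamma (x + s)) ∧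
      log (Gamma (x + 1)) - log (Gamma (x + s)) ≤ (1 - s) * log (x + s) := by
  have hconv := convexOn_log_Gamma.2
  have hg : ∀ {y : ℝ}, 0 < y → log (Gamma (y + 1)) = log y + log (Gamma y) := fun hy => by
    rw [Gamma_add_one hy.ne', log_mul hy.ne' (Gamma_pos_of_pos hy).ne']
  have hxs : 0 < x + s := by positivity
  have h1 := hconv (Set.mem_Ioi.2 hx) (Set.mem_Ioi.2 (show 0 < x + 1 by positivity))
    (sub_nonneg.2 hs1.le) hs0.le (by ring)
  have h2 := hconv (Set.mem_Ioi.2 hxs) (Set.mem_Ioi.2 (show 0 < x + s + 1 by positivity))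
    hs0.le (sub_nonneg.2 hs1.le) (by ring)
  simp only [smul_eq_mul, Function.comp_apply] at h1 h2
  rw [show (1 - s) * x + s * (x + 1) = x + s by ring, hg hx] at h1
  rw [show s * (x + s) + (1 - s) * (x + s + 1) = x + 1 by ring, hg hxs] at h2
  rw [hg hx] at h2 ⊢
  constructor <;> linarith

theorem tendsto_logGammaRatio {s : ℝ} (hs0 : 0 < s) (hs1 : s < 1) (c : ℝ) :
    Filter.Tendsto (logGammaRatio s c) Filter.atTop (nhds 0) := by
  have hl := (tendsto_log_add_sub_log_add 0 c).const_mul (1 - s)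
  have hu := (tendsto_log_add_sub_log_add s c).const_mul (1 - s)
  rw [mul_zero] at hl hu
  refine tendsto_of_tendsto_of_tendsto_of_le_of_le' hl hu ?_ ?_ <;>
  · filter_upwards [Filter.eventually_gt_atTop 0] with x hx
    have h := log_Gamma_add_one_sub_log_Gamma_add_bounds hs0 hs1 hx
    simp only [logGammaRatio, add_zero, mul_sub]
    linarith [h.1, h.2]

theorem hasDerivAt_logGammaRatioStep {s c x : ℝ} (hs : 0 < s) (hc : 0 < c) (hx : 0 < x) :
    HasDerivAt (logGammaRatioStep s c)
      ((1 - s) * (((x + s) * (x + 1))⁻¹ - ((x + c) * (x + (c + 1)))⁻¹)) x := by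
  have h : ∀ a : ℝ, 0 < a → HasDerivAt (fun y : ℝ => log (y + a)) (1 / (x + a)) x :=
    fun a ha => ((hasDerivAt_id x).add_const a).log (by simp; positivity)
  have hd := ((h s hs).sub (h 1 one_pos)).add
    (((h (c + 1) (by positivity)).sub (h c hc)).const_mul (1 - s))
  refine hd.congr_deriv ?_
  field_simp
  ring

theorem logGammaRatioStep_strictAntiOn {s c : ℝ} (hs0 : 0 < s) (hs1 : s < 1) (hc : 0 < c)
    (h : ∀ x, 0 < x → (x + c) * (x + (c + 1)) < (x + s) * (x + 1)) :
    StrictAntiOn (logGammaRatioStep s c) (Set.Ioi 0) := by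
  have hd := fun x (hx : 0 < x) => hasDerivAt_logGammaRatioStep hs0 hc hx
  refine strictAntiOn_of_deriv_neg (convex_Ioi 0)
    (fun x hx => (hd x hx).continuousAt.continuousWithinAt) fun x hx => ?_
  rw [interior_Ioi] at hx
  have hx : 0 < x := hx
  rw [(hd x hx).deriv]
  refine mul_neg_of_pos_of_neg (sub_pos.2 hs1) (sub_neg.2 ?_)
  exact inv_strictAnti₀ (by positivity) (h x hx)

theorem logGammaRatioStep_strictMonoOn {s c : ℝ} (hs0 : 0 < s) (hs1 : s < 1) (hc : 0 < c)
    (h : ∀ x, 0 < x → (x + s) * (x + 1) < (x + c) * (x + (c + 1))) :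
    StrictMonoOn (logGammaRatioStep s c) (Set.Ioi 0) := by
  have hd := fun x (hx : 0 < x) => hasDerivAt_logGammaRatioStep hs0 hc hx
  refine strictMonoOn_of_deriv_pos (convex_Ioi 0)
    (fun x hx => (hd x hx).continuousAt.continuousWithinAt) fun x hx => ?_
  rw [interior_Ioi] at hx
  have hx : 0 < x := hx
  rw [(hd x hx).deriv]
  refine mul_pos (sub_pos.2 hs1) (sub_pos.2 ?_)
  exact inv_strictAnti₀ (by positivity) (h x hx)

theorem logGammaRatio_pos {s c x : ℝ} (hs0 : 0 < s) (hs1 : s < 1) (hc : 0 < c)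
    (h : ∀ x, 0 < x → (x + c) * (x + (c + 1)) < (x + s) * (x + 1)) (hx : 0 < x) :
    0 < logGammaRatio s c x := by
  refine pos_of_add_one_lt_of_tendsto_zero (fun y hy => ?_) (tendsto_logGammaRatio hs0 hs1 c) hx
  rw [← sub_pos, logGammaRatio_sub_add_one hs0 hy]
  exact pos_of_add_one_lt_of_tendsto_zero
    (fun z hz => logGammaRatioStep_strictAntiOn hs0 hs1 hc h hz
      (Set.mem_Ioi.2 (by positivity)) (lt_add_one z))
    (tendsto_logGammaRatioStep s c) hy

theorem logGammaRatio_neg {s c x : ℝ} (hs0 : 0 < s) (hs1 : s < 1) (hc : 0 < c)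
    (h : ∀ x, 0 < x → (x + s) * (x + 1) < (x + c) * (x + (c + 1))) (hx : 0 < x) :
    logGammaRatio s c x < 0 := by
  refine neg_pos.1 (pos_of_add_one_lt_of_tendsto_zero (f := fun y => -logGammaRatio s c y)
    (fun y hy => ?_) (by simpa using (tendsto_logGammaRatio hs0 hs1 c).neg) hx)
  rw [neg_lt_neg_iff, ← sub_neg, logGammaRatio_sub_add_one hs0 hy]
  exact neg_pos.1 (pos_of_add_one_lt_of_tendsto_zero (f := fun y => -logGammaRatioStep s c y)
    (fun z hz => neg_lt_neg (logGammaRatioStep_strictMonoOn hs0 hs1 hc h hz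
      (Set.mem_Ioi.2 (by positivity)) (lt_add_one z)))
    (by simpa using (tendsto_logGammaRatioStep s c).neg) hy)

theorem log_Gamma_div_sub_log_rpow {s c x : ℝ} (hs : 0 < s) (hc : 0 < c) (hx : 0 < x) :
    log (Gamma (x + 1) / Gamma (x + s)) - log ((x + c) ^ (1 - s)) = logGammaRatio s c x := by
  rw [log_div (Gamma_pos_of_pos (by positivity)).ne' (Gamma_pos_of_pos (by positivity)).ne',
    log_rpow (by positivity), logGammaRatio]

theorem kershaw_first_double_inequality (s x : ℝ) (hs0 : 0 < s) (hs1 : s < 1) (hx : 0 < x) :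
    (x + s / 2) ^ (1 - s) < Gamma (x + 1) / Gamma (x + s) ∧
      Gamma (x + 1) / Gamma (x + s) < (x - 1 / 2 + Real.sqrt (s + 1 / 4)) ^ (1 - s) := by
  have hpos : 0 < Gamma (x + 1) / Gamma (x + s) :=
    div_pos (Gamma_pos_of_pos (by positivity)) (Gamma_pos_of_pos (by positivity))
  constructor
  · have hc : 0 < s / 2 := by positivity
    rw [← log_lt_log_iff (by positivity) hpos, ← sub_pos, log_Gamma_div_sub_log_rpow hs0 hc hx]
    exact logGammaRatio_pos hs0 hs1 hc (fun y hy => by nlinarith) hx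
  · obtain ⟨c, hcdef⟩ : ∃ c, c = √(s + 1 / 4) - 1 / 2 := ⟨_, rfl⟩
    have hsq : √(s + 1 / 4) ^ 2 = s + 1 / 4 := sq_sqrt (by positivity)
    have hlt : (s + 1) / 2 < √(s + 1 / 4) := lt_sqrt_of_sq_lt (by nlinarith)
    have hcs : s < 2 * c := by linarith
    have hc : 0 < c := by linarith
    have hcc : c * (c + 1) = s := by rw [hcdef]; linarith
    rw [show x - 1 / 2 + √(s + 1 / 4) = x + c by rw [hcdef]; ring,
      ← log_lt_log_iff hpos (by positivity), ← sub_neg, log_Gamma_div_sub_log_rpow hs0 hc hx]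
    exact logGammaRatio_neg hs0 hs1 hc (fun y hy => by nlinarith [mul_pos hy (sub_pos.2 hcs)]) hx
end

section
/- Let s ≠ t be real numbers with α = min{s, t}, and define z_{s,t}(x) = (Γ(x+t)/Γ(x+s))^{1/(t-s)} - x for x ∈ (-α, ∞). If 0 < |t - s| < 1 then z_{s,t} is convex and decreasing on (-α, ∞), and if |t - s| > 1 then z_{s,t} is concave and increasing on (-α, ∞). (Elezović–Giordano–Pečarić's theorem.) -/
open Real

namespace GammaRatio

open Filter Topology Set

/-- The logarithm of the gamma function on the real line. -/
noncomputable def logGamma (x : ℝ) : ℝ := Real.log (Real.Gamma x)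

lemma convexOn_logGamma : ConvexOn ℝ (Ioi 0) logGamma := convexOn_log_Gamma

lemma differentiableAt_logGamma {x : ℝ} (hx : 0 < x) : DifferentiableAt ℝ logGamma x := by
  have h : DifferentiableAt ℝ Real.Gamma x := Real.differentiableAt_Gamma fun m => by
    have : (0 : ℝ) ≤ m := m.cast_nonneg
    linarith
  exact h.log (Gamma_pos_of_pos hx).ne'

lemma logGamma_add_one {x : ℝ} (hx : 0 < x) : logGamma (x + 1) = logGamma x + Real.log x := by
  rw [logGamma, Gamma_add_one hx.ne', Real.log_mul hx.ne' (Gamma_pos_of_pos hx).ne', add_comm]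
  rfl

lemma monotoneOn_deriv_logGamma : MonotoneOn (deriv logGamma) (Ioi 0) :=
  convexOn_logGamma.monotoneOn_deriv fun _ hx => differentiableAt_logGamma hx

lemma deriv_logGamma_add_one {x : ℝ} (hx : 0 < x) :
    deriv logGamma (x + 1) = deriv logGamma x + 1 / x := by
  have h : (fun y => logGamma (y + 1)) =ᶠ[𝓝 x] fun y => logGamma y + Real.log y := by
    filter_upwards [Ioi_mem_nhds hx] with y hy using logGamma_add_one hy
  have h2 := h.deriv_eq
  rw [deriv_comp_add_const, deriv_fun_add (differentiableAt_logGamma hx)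
    (Real.differentiableAt_log hx.ne'), Real.deriv_log] at h2
  rw [h2, one_div]

lemma tendsto_deriv_logGamma_add_sub {x : ℝ} (hx : 0 < x) (N : ℕ) :
    Tendsto (fun n : ℕ => deriv logGamma (x + n + N) - deriv logGamma (x + n)) atTop (𝓝 0) := by
  induction N with
  | zero => simp
  | succ N ih =>
    have h : Tendsto (fun n : ℕ => 1 / (x + n + N)) atTop (𝓝 0) := by
      simp only [one_div]
      refine tendsto_inv_atTop_zero.comp ?_
      exact tendsto_atTop_add_const_right _ _
        (tendsto_atTop_add_const_left _ _ tendsto_natCast_atTop_atTop)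
    have h2 := ih.add h
    rw [add_zero] at h2
    refine h2.congr fun n => ?_
    have : 0 < x + n + N := by positivity
    have h3 := deriv_logGamma_add_one this
    push_cast
    rw [← add_assoc, h3]
    ring

/-- The derivative of `x ↦ log (Γ (x + a) / Γ x) / a`. -/
noncomputable def digammaSlope (a x : ℝ) : ℝ := (deriv logGamma (x + a) - deriv logGamma x) / a

lemma digammaSlope_sub {a x : ℝ} (ha : 0 < a) (hx : 0 < x) :
    digammaSlope a x - digammaSlope a (x + 1) = 1 / (x * (x + a)) := by
  have h1 := deriv_logGamma_add_one hx
  have h2 := deriv_logGamma_add_one (add_pos hx ha)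
  rw [digammaSlope, digammaSlope, h1, show x + 1 + a = x + a + 1 by ring, h2]
  have : 0 < x + a := by positivity
  field_simp
  ring

lemma tendsto_digammaSlope {a x : ℝ} (ha : 0 < a) (hx : 0 < x) :
    Tendsto (fun n : ℕ => digammaSlope a (x + n)) atTop (𝓝 0) := by
  obtain ⟨N, hN⟩ := exists_nat_ge a
  have h := (tendsto_deriv_logGamma_add_sub hx N).div_const a
  rw [zero_div] at h
  refine tendsto_of_tendsto_of_tendsto_of_le_of_le tendsto_const_nhds h (fun n => ?_) fun n => ?_
  · have h0 : 0 < x + n := by positivity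
    exact div_nonneg (sub_nonneg.2 (monotoneOn_deriv_logGamma h0 (add_pos h0 ha) (by linarith)))
      ha.le
  · have h0 : 0 < x + n := by positivity
    have h1 : 0 < x + n + a := by positivity
    have h2 : 0 < x + n + N := by positivity
    have := monotoneOn_deriv_logGamma h1 h2 (by linarith)
    simp only [digammaSlope]
    gcongr

lemma hasSum_digammaSlope {a x : ℝ} (ha : 0 < a) (hx : 0 < x) :
    HasSum (fun n : ℕ => 1 / ((x + n) * (x + n + a))) (digammaSlope a x) := by
  rw [hasSum_iff_tendsto_nat_of_nonneg (fun n => by positivity)]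
  have h := (tendsto_digammaSlope ha hx).const_sub (digammaSlope a x)
  rw [sub_zero] at h
  refine h.congr fun n => ?_
  induction n with
  | zero => simp
  | succ n ih =>
    have h0 : 0 < x + n := by positivity
    rw [Finset.sum_range_succ, ← ih, ← digammaSlope_sub ha h0]
    push_cast
    ring_nf

/-- Minus the derivative of the `n`-th summand in the series for `digammaSlope a`. -/
noncomputable def slopeTerm (a x : ℝ) (n : ℕ) : ℝ :=
  (2 * (x + n) + a) / ((x + n) * (x + n + a)) ^ 2

lemma slopeTerm_nonneg {a x : ℝ} (ha : 0 < a) (hx : 0 < x) (n : ℕ) : 0 ≤ slopeTerm a x n := by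
  unfold slopeTerm
  positivity

lemma slopeTerm_le {a x y : ℝ} (ha : 0 < a) (hx : 0 < x) (hxy : x ≤ y) (n : ℕ) :
    slopeTerm a y n ≤ 2 / x * (1 / ((x + n) * (x + n + a))) := by
  have hy : 0 < y := hx.trans_le hxy
  have hn : (0 : ℝ) ≤ n := n.cast_nonneg
  calc slopeTerm a y n ≤ 2 / (y + n) * (1 / ((y + n) * (y + n + a))) := by
        unfold slopeTerm
        rw [div_mul_div_comm, div_le_div_iff₀ (by positivity) (by positivity)]
        have h1 : 0 < y + n := by positivity
        generalize y + n = z at h1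
        nlinarith [mul_pos h1 ha, pow_pos h1 3]
    _ ≤ 2 / x * (1 / ((x + n) * (x + n + a))) := by
        gcongr
        linarith

lemma summable_slopeTerm {a x : ℝ} (ha : 0 < a) (hx : 0 < x) : Summable (slopeTerm a x) :=
  .of_nonneg_of_le (slopeTerm_nonneg ha hx) (slopeTerm_le ha hx le_rfl)
    ((hasSum_digammaSlope ha hx).summable.mul_left _)

lemma hasDerivAt_digammaSlope {a x : ℝ} (ha : 0 < a) (hx : 0 < x) :
    HasDerivAt (digammaSlope a) (-∑' n, slopeTerm a x n) x := by
  have hx2 : 0 < x / 2 := by positivity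
  have key : HasDerivAt (fun y => ∑' n : ℕ, 1 / ((y + n) * (y + n + a)))
      (∑' n, -slopeTerm a x n) x := by
    have hxmem : x ∈ Ioi (x / 2) := half_lt_self hx
    have hbound : Summable fun n : ℕ => 2 / (x / 2) * (1 / ((x / 2 + n) * (x / 2 + n + a))) :=
      (hasSum_digammaSlope ha hx2).summable.mul_left _
    refine hasDerivAt_tsum_of_isPreconnected
      (g := fun (n : ℕ) y => 1 / ((y + n) * (y + n + a)))
      (g' := fun n y => -slopeTerm a y n) hbound isOpen_Ioi isPreconnected_Ioi
      (fun n y hy => ?_) (fun n y hy => ?_) hxmem (hasSum_digammaSlope ha hx).summable hxmem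
    · have hy0 : 0 < y := hx2.trans hy
      have h0 : (y + n) * (y + n + a) ≠ 0 := by positivity
      have h1 : HasDerivAt (fun y : ℝ => y + n) 1 y := (hasDerivAt_id y).add_const _
      have h2 := (h1.mul (h1.add_const a)).inv h0
      simp only [one_div]
      refine h2.congr_deriv ?_
      rw [slopeTerm, neg_div]
      congr 2
      ring
    · have hy0 : 0 < y := hx2.trans hy
      rw [norm_neg, Real.norm_of_nonneg (slopeTerm_nonneg ha hy0 n)]
      exact slopeTerm_le ha hx2 (le_of_lt hy) n
  rw [tsum_neg] at key
  refine key.congr_of_eventuallyEq ?_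
  filter_upwards [Ioi_mem_nhds hx] with y hy using (hasSum_digammaSlope ha hy).tsum_eq.symm

lemma slopeTerm_add (a x : ℝ) (n m : ℕ) : slopeTerm a (x + m) n = slopeTerm a x (n + m) := by
  simp only [slopeTerm]
  push_cast
  ring_nf

lemma tendsto_tsum_slopeTerm (a x : ℝ) :
    Tendsto (fun m : ℕ => ∑' n, slopeTerm a (x + m) n) atTop (𝓝 0) := by
  simp only [slopeTerm_add]
  exact tendsto_sum_nat_add _

lemma tsum_slopeTerm_sub {a x : ℝ} (ha : 0 < a) (hx : 0 < x) :
    ∑' n, slopeTerm a x n - ∑' n, slopeTerm a (x + 1) n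
      = (2 * x + a) / (x * (x + a)) ^ 2 := by
  rw [(summable_slopeTerm ha hx).tsum_eq_zero_add]
  have h : ∀ n, slopeTerm a (x + 1) n = slopeTerm a x (n + 1) := fun n => by
    simpa using slopeTerm_add a x n 1
  simp only [h, add_sub_cancel_right]
  simp [slopeTerm]

/-- A function that strictly decreases along unit steps and tends to zero along them is positive. -/
lemma pos_of_step {u : ℝ → ℝ} (hstep : ∀ x, 0 < x → 0 < u x - u (x + 1))
    (hlim : ∀ x, 0 < x → Tendsto (fun n : ℕ => u (x + n)) atTop (𝓝 0)) {x : ℝ} (hx : 0 < x) :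
    0 < u x := by
  have hanti : StrictAnti fun n : ℕ => u (x + n) := strictAnti_nat_of_succ_lt fun n => by
    have := hstep (x + n) (by positivity)
    push_cast
    rw [← add_assoc]
    linarith
  have h1 : 0 ≤ u (x + (1 : ℕ)) := hanti.antitone.le_of_tendsto (hlim x hx) 1
  have h2 := hanti Nat.zero_lt_one
  simp only [Nat.cast_zero, add_zero] at h2
  exact h1.trans_lt h2

lemma tendsto_natCast_shift_inv (b : ℝ) :
    Tendsto (fun n : ℕ => (b + (n : ℝ))⁻¹) atTop (𝓝 0) :=
  tendsto_inv_atTop_zero.comp (tendsto_atTop_add_const_left _ _ tendsto_natCast_atTop_atTop)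

lemma digammaSlope_bound {a x : ℝ} (ha : 0 < a) (ha1 : a ≠ 1) (hx : 0 < x) :
    0 < (1 - a) * (2 * digammaSlope a x - (2 * x + a + 1) / (x * (x + a))) := by
  refine pos_of_step
    (u := fun x => (1 - a) * (2 * digammaSlope a x - (2 * x + a + 1) / (x * (x + a))))
    (fun x hx => ?_) (fun x hx => ?_) hx
  · have h := digammaSlope_sub ha hx
    have h0 : digammaSlope a x = digammaSlope a (x + 1) + 1 / (x * (x + a)) := by linarith
    have hsq : 0 < (1 - a) ^ 2 := by
      have : 1 - a ≠ 0 := sub_ne_zero.2 ha1.symm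
      positivity
    have : (1 - a) * (2 * digammaSlope a x - (2 * x + a + 1) / (x * (x + a)))
        - (1 - a) * (2 * digammaSlope a (x + 1)
          - (2 * (x + 1) + a + 1) / ((x + 1) * (x + 1 + a)))
        = (1 - a) ^ 2 * (1 + a) / (x * (x + a) * ((x + 1) * (x + 1 + a))) := by
      rw [h0]
      have h1 : x + a ≠ 0 := by positivity
      have h2 : x + 1 + a ≠ 0 := by positivity
      field_simp
      ring
    rw [this]
    positivity
  · have h1 := tendsto_digammaSlope ha hx
    have h2 := tendsto_natCast_shift_inv x
    have h3 := tendsto_natCast_shift_inv (x + a)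
    have h4 := ((h1.const_mul 2).sub ((h2.add h3).add (h2.mul h3))).const_mul (1 - a)
    simp only [mul_zero, add_zero, sub_zero] at h4
    refine h4.congr fun n => ?_
    have h5 : 0 < x + n := by positivity
    have h6 : 0 < x + n + a := by positivity
    have h7 : x + a + n = x + n + a := by ring
    rw [h7]
    field_simp
    ring

lemma digammaSlope_sq_sub {a x : ℝ} (ha : 0 < a) (ha1 : a ≠ 1) (hx : 0 < x) :
    0 < (1 - a) * (digammaSlope a x ^ 2 - ∑' n, slopeTerm a x n) := by
  refine pos_of_step (u := fun x => (1 - a) * (digammaSlope a x ^ 2 - ∑' n, slopeTerm a x n))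
    (fun x hx => ?_) (fun x hx => ?_) hx
  · have h1 := digammaSlope_sub ha hx
    have h2 := tsum_slopeTerm_sub ha hx
    have h3 := digammaSlope_bound ha ha1 hx
    have h4 : 0 < 1 / (x * (x + a)) := by positivity
    have h5 : digammaSlope a (x + 1) = digammaSlope a x - 1 / (x * (x + a)) := by linarith
    have h6 : ∑' n, slopeTerm a (x + 1) n
        = ∑' n, slopeTerm a x n - (2 * x + a) / (x * (x + a)) ^ 2 := by linarith
    have h7 := mul_pos h4 h3
    rw [h5, h6]
    convert! h7 using 1
    have h8 : x + a ≠ 0 := by positivity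
    field_simp
    ring
  · have h := (((tendsto_digammaSlope ha hx).pow 2).sub (tendsto_tsum_slopeTerm a x)).const_mul
      (1 - a)
    simpa using h

/-- The function `(Γ (x + a) / Γ x) ^ (1 / a)`, written through the logarithm. -/
noncomputable def ratioRoot (a x : ℝ) : ℝ := Real.exp ((logGamma (x + a) - logGamma x) / a)

lemma ratioRoot_eq {a x : ℝ} (ha : 0 < a) (hx : 0 < x) :
    (Real.Gamma (x + a) / Real.Gamma x) ^ (1 / a) = ratioRoot a x := by
  have h1 := Gamma_pos_of_pos hx
  have h2 := Gamma_pos_of_pos (add_pos hx ha)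
  rw [Real.rpow_def_of_pos (div_pos h2 h1), Real.log_div h2.ne' h1.ne', ratioRoot, mul_one_div]
  rfl

lemma hasDerivAt_ratioRoot {a x : ℝ} (ha : 0 < a) (hx : 0 < x) :
    HasDerivAt (ratioRoot a) (ratioRoot a x * digammaSlope a x) x := by
  have h1 := (differentiableAt_logGamma hx).hasDerivAt
  have h2 := (differentiableAt_logGamma (add_pos hx ha)).hasDerivAt.comp_add_const x a
  exact ((h2.sub h1).div_const a).exp

lemma strictConvexOn_ratioRoot {a : ℝ} (ha : 0 < a) (ha1 : a ≠ 1) :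
    StrictConvexOn ℝ (Ioi 0) fun x => (1 - a) * (ratioRoot a x - x) := by
  have hd : ∀ x, 0 < x → HasDerivAt (fun x => (1 - a) * (ratioRoot a x - x))
      ((1 - a) * (ratioRoot a x * digammaSlope a x - 1)) x := fun x hx =>
    ((hasDerivAt_ratioRoot ha hx).sub (hasDerivAt_id x)).const_mul _
  have hd2 : ∀ x, 0 < x → HasDerivAt
      (fun x => (1 - a) * (ratioRoot a x * digammaSlope a x - 1))
      (ratioRoot a x * ((1 - a) * (digammaSlope a x ^ 2 - ∑' n, slopeTerm a x n))) x :=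
    fun x hx => by
      refine ((((hasDerivAt_ratioRoot ha hx).mul (hasDerivAt_digammaSlope ha hx)).sub_const
        1).const_mul (1 - a)).congr_deriv ?_
      ring
  refine StrictMonoOn.strictConvexOn_of_deriv (convex_Ioi 0)
    (fun x hx => (hd x hx).continuousAt.continuousWithinAt) ?_
  rw [interior_Ioi]
  refine StrictMonoOn.congr (f₁ := fun x => (1 - a) * (ratioRoot a x * digammaSlope a x - 1)) ?_
    fun x hx => (hd x hx).deriv.symm
  refine strictMonoOn_of_deriv_pos (convex_Ioi 0)
    (fun x hx => (hd2 x hx).continuousAt.continuousWithinAt) fun x hx => ?_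
  rw [interior_Ioi] at hx
  rw [(hd2 x hx).deriv]
  exact mul_pos (Real.exp_pos _) (digammaSlope_sq_sub ha ha1 hx)

lemma ratioRoot_sub_nonpos {a x : ℝ} (ha : 0 < a) (hx : 0 < x) :
    (1 - a) * (ratioRoot a x - x) ≤ 0 := by
  have hmem : ∀ b : ℝ, 0 < b → x + b ∈ Ioi (0 : ℝ) := fun b hb => add_pos hx hb
  have hlog : (logGamma (x + 1) - logGamma x) / (x + 1 - x) = Real.log x := by
    rw [logGamma_add_one hx]
    simp
  have hsec : ∀ b c : ℝ, 0 < b → b ≤ c →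
      (logGamma (x + b) - logGamma x) / (x + b - x)
        ≤ (logGamma (x + c) - logGamma x) / (x + c - x) := fun b c hb hbc =>
    convexOn_logGamma.secant_mono hx (hmem b hb) (hmem c (hb.trans_le hbc)) (by linarith)
      (by linarith) (by linarith)
  rcases le_total a 1 with h | h
  · have h1 := hsec a 1 ha h
    rw [hlog, add_sub_cancel_left] at h1
    have h2 := Real.exp_le_exp.2 h1
    rw [Real.exp_log hx] at h2
    exact mul_nonpos_of_nonneg_of_nonpos (by linarith) (sub_nonpos.2 h2)
  · have h1 := hsec 1 a one_pos h
    rw [hlog, add_sub_cancel_left] at h1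
    have h2 := Real.exp_le_exp.2 h1
    rw [Real.exp_log hx] at h2
    exact mul_nonpos_of_nonpos_of_nonneg (by linarith) (sub_nonneg.2 h2)

/-- A strictly convex function on an upper half-line that is bounded above is strictly
decreasing. -/
lemma strictAntiOn_of_strictConvexOn_of_nonpos {c : ℝ} {f : ℝ → ℝ}
    (hf : StrictConvexOn ℝ (Ioi c) f) (hb : ∀ x, c < x → f x ≤ 0) : StrictAntiOn f (Ioi c) := by
  intro x hx y hy hxy
  by_contra! hle
  have hx : c < x := hx
  have hy : c < y := hy
  have h1 : y + 1 ∈ Ioi c := by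
    change c < y + 1
    linarith
  have h2 := hf.slope_strict_mono_adjacent hx h1 hxy (lt_add_one y)
  rw [add_sub_cancel_left, div_one] at h2
  have hd : 0 < f (y + 1) - f y := (div_nonneg (by linarith) (by linarith)).trans_lt h2
  set d := f (y + 1) - f y with hd_def
  have h3 : 0 < (1 - f (y + 1)) / d := div_pos (by linarith [hb (y + 1) h1]) hd
  have h4 : y + 1 + (1 - f (y + 1)) / d ∈ Ioi c := by
    change c < _
    linarith
  have h5 := hf.slope_strict_mono_adjacent hy h4 (lt_add_one y) (lt_add_of_pos_right _ h3)
  rw [add_sub_cancel_left, add_sub_cancel_left, div_one, ← hd_def, lt_div_iff₀ h3,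
    mul_div_cancel₀ _ hd.ne'] at h5
  linarith [hb _ h4]

lemma strictConvexOn_shift {s t : ℝ} (hst : s < t) (h1 : t - s ≠ 1) :
    StrictConvexOn ℝ (Ioi (-s)) (fun x : ℝ => (1 - (t - s)) *
      ((Real.Gamma (x + t) / Real.Gamma (x + s)) ^ (1 / (t - s)) - x)) ∧
    StrictAntiOn (fun x : ℝ => (1 - (t - s)) *
      ((Real.Gamma (x + t) / Real.Gamma (x + s)) ^ (1 / (t - s)) - x)) (Ioi (-s)) := by
  have ha : 0 < t - s := sub_pos.2 hst
  set F : ℝ → ℝ := fun x => (1 - (t - s)) * (ratioRoot (t - s) x - x) with hF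
  have hc : StrictConvexOn ℝ (Ioi 0) F := strictConvexOn_ratioRoot ha h1
  have hm : StrictAntiOn F (Ioi 0) := strictAntiOn_of_strictConvexOn_of_nonpos hc
    fun x hx => ratioRoot_sub_nonpos ha hx
  have heq : ∀ x ∈ Ioi (-s), (1 - (t - s)) *
      ((Real.Gamma (x + t) / Real.Gamma (x + s)) ^ (1 / (t - s)) - x)
      = F (x + s) + (1 - (t - s)) * s := fun x hx => by
    have hx' : 0 < x + s := by
      have : -s < x := hx
      linarith
    rw [hF]
    simp only
    rw [← ratioRoot_eq ha hx', show x + s + (t - s) = x + t by ring]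
    ring
  have hpos : ∀ x ∈ Ioi (-s), x + s ∈ Ioi (0 : ℝ) := fun x hx => by
    have : -s < x := hx
    change 0 < x + s
    linarith
  refine ⟨⟨convex_Ioi _, fun x hx y hy hxy p q hp hq hpq => ?_⟩, fun x hx y hy hxy => ?_⟩
  · have hz := convex_Ioi (-s) hx hy hp.le hq.le hpq
    have h := hc.2 (hpos x hx) (hpos y hy) (fun h => hxy (add_right_cancel h)) hp hq hpq
    have e : p • (x + s) + q • (y + s) = p • x + q • y + s := by
      simp only [smul_eq_mul]
      linear_combination s * hpq
    rw [e] at h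
    beta_reduce
    rw [heq x hx, heq y hy, heq _ hz]
    simp only [smul_eq_mul] at h ⊢
    linear_combination h - (1 - (t - s)) * s * hpq
  · beta_reduce
    rw [heq x hx, heq y hy]
    have := hm (hpos x hx) (hpos y hy) (add_lt_add_left hxy s)
    linarith

lemma ratio_swap (s t x : ℝ) (hs : 0 < x + s) (ht : 0 < x + t) :
    (Real.Gamma (x + t) / Real.Gamma (x + s)) ^ (1 / (t - s))
      = (Real.Gamma (x + s) / Real.Gamma (x + t)) ^ (1 / (s - t)) := by
  have h1 := Gamma_pos_of_pos hs
  have h2 := Gamma_pos_of_pos ht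
  rw [← inv_div (Real.Gamma (x + s)), Real.inv_rpow (div_pos h1 h2).le,
    ← Real.rpow_neg (div_pos h1 h2).le, ← neg_sub s t, one_div_neg_eq_neg_one_div, neg_neg]

lemma convex_and_monotone_of_lt {s t : ℝ} (hst : s < t) :
    (t - s < 1 →
      ConvexOn ℝ (Ioi (-s))
          (fun x : ℝ => (Real.Gamma (x + t) / Real.Gamma (x + s)) ^ (1 / (t - s)) - x) ∧
        StrictAntiOn
          (fun x : ℝ => (Real.Gamma (x + t) / Real.Gamma (x + s)) ^ (1 / (t - s)) - x)
          (Ioi (-s))) ∧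
    (1 < t - s →
      ConcaveOn ℝ (Ioi (-s))
          (fun x : ℝ => (Real.Gamma (x + t) / Real.Gamma (x + s)) ^ (1 / (t - s)) - x) ∧
        StrictMonoOn
          (fun x : ℝ => (Real.Gamma (x + t) / Real.Gamma (x + s)) ^ (1 / (t - s)) - x)
          (Ioi (-s))) := by
  refine ⟨fun h => ?_, fun h => ?_⟩
  · obtain ⟨hc, hm⟩ := strictConvexOn_shift hst h.ne
    have hpos : 0 < 1 - (t - s) := sub_pos.2 h
    refine ⟨⟨convex_Ioi _, fun x hx y hy p q hp hq hpq => ?_⟩, fun x hx y hy hxy => ?_⟩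
    · have := hc.convexOn.2 hx hy hp hq hpq
      refine le_of_mul_le_mul_left (this.trans_eq ?_) hpos
      simp only [smul_eq_mul]
      ring
    · exact lt_of_mul_lt_mul_left (hm hx hy hxy) hpos.le
  · obtain ⟨hc, hm⟩ := strictConvexOn_shift hst h.ne'
    have hneg : 1 - (t - s) < 0 := sub_neg.2 h
    refine ⟨⟨convex_Ioi _, fun x hx y hy p q hp hq hpq => ?_⟩, fun x hx y hy hxy => ?_⟩
    · have := hc.convexOn.2 hx hy hp hq hpq
      refine (mul_le_mul_left_of_neg hneg).1 (this.trans_eq ?_)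
      simp only [smul_eq_mul]
      ring
    · exact (mul_lt_mul_left_of_neg hneg).1 (hm hx hy hxy)

end GammaRatio

/-- Elezović–Giordano–Pečarić's theorem: the function
`z_{s,t}(x) = (Γ(x+t)/Γ(x+s))^{1/(t-s)} - x` is convex and decreasing on `(-min{s,t}, ∞)`
when `0 < |t-s| < 1`, and concave and increasing there when `|t-s| > 1`. -/
theorem elezovic_giordano_pecaric (s t : ℝ) (hst : s ≠ t) :
    (|t - s| < 1 →
      ConvexOn ℝ (Set.Ioi (-(min s t)))
          (fun x : ℝ => (Gamma (x + t) / Gamma (x + s)) ^ (1 / (t - s)) - x) ∧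
        StrictAntiOn (fun x : ℝ => (Gamma (x + t) / Gamma (x + s)) ^ (1 / (t - s)) - x)
          (Set.Ioi (-(min s t)))) ∧
    (1 < |t - s| →
      ConcaveOn ℝ (Set.Ioi (-(min s t)))
          (fun x : ℝ => (Gamma (x + t) / Gamma (x + s)) ^ (1 / (t - s)) - x) ∧
        StrictMonoOn (fun x : ℝ => (Gamma (x + t) / Gamma (x + s)) ^ (1 / (t - s)) - x)
          (Set.Ioi (-(min s t)))) := by
  rcases lt_or_gt_of_ne hst with h | h
  · rw [min_eq_left h.le, abs_of_pos (sub_pos.2 h)]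
    exact GammaRatio.convex_and_monotone_of_lt h
  · rw [min_eq_right h.le, abs_of_neg (sub_neg.2 h), neg_sub]
    have heq : Set.EqOn (fun x : ℝ => (Gamma (x + s) / Gamma (x + t)) ^ (1 / (s - t)) - x)
        (fun x : ℝ => (Gamma (x + t) / Gamma (x + s)) ^ (1 / (t - s)) - x)
        (Set.Ioi (-t)) := fun x hx => by
      have hx : -t < x := hx
      have := GammaRatio.ratio_swap s t x (by linarith) (by linarith)
      simp only [this]
    obtain ⟨h1, h2⟩ := GammaRatio.convex_and_monotone_of_lt h
    exact ⟨fun h' => ⟨(h1 h').1.congr heq, (h1 h').2.congr heq⟩,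
      fun h' => ⟨(h2 h').1.congr heq, (h2 h').2.congr heq⟩⟩
end

section
/- For every real number t > 0, the function x ↦ e^{ψ(x+t)} - x is decreasing and convex on (0, ∞); moreover it tends to e^{ψ(t)} as x → 0⁺ and tends to t - 1/2 as x → ∞, so its range on (0,∞) is the interval (t - 1/2, e^{ψ(t)}). -/
open Real Filter

/-- The digamma (psi) function, the derivative of `log ∘ Γ`. -/
noncomputable def digamma : ℝ → ℝ :=
  deriv fun x : ℝ => Real.log (Real.Gamma x)

open Set Topology

lemma differentiableAt_log_Gamma {x : ℝ} (hx : 0 < x) :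
    DifferentiableAt ℝ (fun x : ℝ => Real.log (Real.Gamma x)) x :=
  (Real.differentiableAt_Gamma fun m => by
    have : (0 : ℝ) ≤ m := m.cast_nonneg
    linarith).log (Real.Gamma_pos_of_pos hx).ne'

lemma log_Gamma_add_one {x : ℝ} (hx : 0 < x) :
    Real.log (Real.Gamma (x + 1)) = Real.log (Real.Gamma x) + Real.log x := by
  rw [Real.Gamma_add_one hx.ne', Real.log_mul hx.ne' (Real.Gamma_pos_of_pos hx).ne', add_comm]

lemma digamma_add_one {x : ℝ} (hx : 0 < x) : digamma (x + 1) = digamma x + 1 / x := by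
  unfold digamma
  rw [← deriv_comp_add_const, one_div, ← Real.deriv_log,
    ← deriv_fun_add (differentiableAt_log_Gamma hx) (Real.differentiableAt_log hx.ne')]
  apply EventuallyEq.deriv_eq
  filter_upwards [eventually_gt_nhds hx] with y hy using log_Gamma_add_one hy

lemma convexOn_fun_log_Gamma :
    ConvexOn ℝ (Ioi 0) (fun x : ℝ => Real.log (Real.Gamma x)) :=
  Real.convexOn_log_Gamma

lemma digamma_le_log {x : ℝ} (hx : 0 < x) : digamma x ≤ Real.log x := by
  have h := convexOn_fun_log_Gamma.deriv_le_slope (x := x) (y := x + 1) hx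
    (by simp only [mem_Ioi]; linarith) (by linarith) (differentiableAt_log_Gamma hx)
  simpa [slope_def_field, log_Gamma_add_one hx, digamma] using h

lemma log_sub_inv_le_digamma {x : ℝ} (hx : 0 < x) : Real.log x - 1 / x ≤ digamma x := by
  have h := convexOn_fun_log_Gamma.slope_le_deriv (x := x) (y := x + 1) hx
    (by simp only [mem_Ioi]; linarith) (by linarith) (differentiableAt_log_Gamma (by linarith))
  have h' : Real.log x ≤ digamma (x + 1) := by
    simpa [slope_def_field, log_Gamma_add_one hx, digamma] using h
  rw [digamma_add_one hx] at h'
  linarith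

lemma tendsto_digamma_sub_log : Tendsto (fun x => digamma x - Real.log x) atTop (𝓝 0) := by
  have h : Tendsto (fun x : ℝ => -(1 / x)) atTop (𝓝 0) := by
    simpa using (tendsto_inv_atTop_zero (𝕜 := ℝ)).neg
  refine tendsto_of_tendsto_of_tendsto_of_le_of_le' h tendsto_const_nhds ?_ ?_
  · filter_upwards [eventually_gt_atTop 0] with x hx
    linarith [log_sub_inv_le_digamma hx]
  · filter_upwards [eventually_gt_atTop 0] with x hx
    linarith [digamma_le_log hx]

lemma nonneg_of_add_one_le_of_tendsto_zero {u : ℝ → ℝ} {a : ℝ}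
    (hu : ∀ x, a < x → u (x + 1) ≤ u x) (hlim : Tendsto u atTop (𝓝 0)) {x : ℝ} (hx : a < x) :
    0 ≤ u x := by
  have hle : ∀ n : ℕ, u (x + n) ≤ u x := by
    intro n
    induction n with
    | zero => simp
    | succ n ih =>
      have hn : (0 : ℝ) ≤ n := n.cast_nonneg
      have := hu (x + n) (by linarith)
      push_cast
      rw [← add_assoc]
      linarith
  exact le_of_tendsto' (hlim.comp
    (tendsto_atTop_add_const_left _ x tendsto_natCast_atTop_atTop)) hle

lemma tendsto_log_sub_log_sub_half :
    Tendsto (fun x : ℝ => Real.log x - Real.log (x - 1 / 2)) atTop (𝓝 0) := by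
  have h := tendsto_const_nhds (x := (1 / 2 : ℝ)).div_atTop
    (tendsto_atTop_add_const_right _ (-(1 / 2 : ℝ)) tendsto_id)
  have h2 : Tendsto (fun x : ℝ => Real.log (1 + 1 / 2 / (x + -(1 / 2)))) atTop (𝓝 0) := by
    have := (h.const_add 1).log (by norm_num)
    simpa using this
  refine h2.congr' ?_
  filter_upwards [eventually_gt_atTop (1 / 2)] with x hx
  rw [← Real.log_div (by linarith) (by linarith)]
  congr 1
  have hx0 : x - 1 / 2 ≠ 0 := by linarith
  rw [← sub_eq_add_neg, eq_div_iff hx0, add_mul, div_mul_cancel₀ _ hx0]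
  ring

lemma log_sub_half_lt_digamma {x : ℝ} (hx : 1 / 2 < x) : Real.log (x - 1 / 2) < digamma x := by
  have step : ∀ y : ℝ, 1 / 2 < y →
      digamma (y + 1) - Real.log (y + 1 - 1 / 2) < digamma y - Real.log (y - 1 / 2) := by
    intro y hy
    have hy' : 0 < y - 1 / 2 := by linarith
    have h := Real.lt_log_one_add_of_pos (inv_pos.2 hy')
    have e1 : 2 * (y - 1 / 2)⁻¹ / ((y - 1 / 2)⁻¹ + 2) = 1 / y := by
      have hy0 : y ≠ 0 := by linarith
      have h2 : (y - 1 / 2)⁻¹ + 2 ≠ 0 := by positivity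
      rw [div_eq_div_iff h2 hy0]
      linear_combination 2 * inv_mul_cancel₀ hy'.ne'
    have e2 : 1 + (y - 1 / 2)⁻¹ = (y + 1 - 1 / 2) / (y - 1 / 2) := by
      rw [eq_div_iff hy'.ne', add_mul, inv_mul_cancel₀ hy'.ne']
      ring
    rw [e1, e2, Real.log_div (by linarith) hy'.ne'] at h
    rw [digamma_add_one (by linarith)]
    linarith
  have hlim : Tendsto (fun x => digamma x - Real.log (x - 1 / 2)) atTop (𝓝 0) := by
    simpa using tendsto_digamma_sub_log.add tendsto_log_sub_log_sub_half
  have h1 := nonneg_of_add_one_le_of_tendsto_zero (fun y hy => (step y hy).le) hlim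
    (x := x + 1) (by linarith)
  have h2 := step x hx
  linarith

lemma neg_half_lt_exp_digamma_sub {x : ℝ} : -(1 / 2) < Real.exp (digamma x) - x := by
  rcases lt_or_ge (1 / 2) x with h | h
  · have := (Real.log_lt_iff_lt_exp (by linarith)).1 (log_sub_half_lt_digamma h)
    linarith
  · linarith [Real.exp_pos (digamma x)]

lemma digamma_le_log_sub {x : ℝ} (hx : 0 < x) : digamma x ≤ Real.log x - 1 / (2 * x) := by
  have step : ∀ y : ℝ, 0 < y →
      Real.log (y + 1) - 1 / (2 * (y + 1)) - digamma (y + 1)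
        ≤ Real.log y - 1 / (2 * y) - digamma y := by
    intro y hy
    have hz : 1 / (2 * y + 1) < 1 := by
      rw [div_lt_one (by linarith)]
      linarith
    have h := Real.log_div_le_sum_range_add (x := 1 / (2 * y + 1)) (by positivity) hz 0
    have e1 : (1 + 1 / (2 * y + 1)) / (1 - 1 / (2 * y + 1)) = (y + 1) / y := by
      rw [div_eq_div_iff (by linarith) hy.ne']
      field_simp
      ring
    have e2 : (1 / (2 * y + 1)) ^ (2 * 0 + 1) / (1 - (1 / (2 * y + 1)) ^ 2)
        = (2 * y + 1) / (4 * y * (y + 1)) := by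
      have : 1 - (1 / (2 * y + 1)) ^ 2 = 4 * y * (y + 1) / (2 * y + 1) ^ 2 := by
        field_simp
        ring
      rw [this, mul_zero, zero_add, pow_one]
      field_simp
    rw [e1, e2, Real.log_div (by linarith) hy.ne'] at h
    rw [digamma_add_one hy]
    have e3 : (2 * y + 1) / (4 * y * (y + 1)) * 2 = 1 / y - 1 / (2 * y) + 1 / (2 * (y + 1)) := by
      field_simp
      ring
    simp only [Finset.range_zero, Finset.sum_empty, zero_add] at h
    linarith
  have hlim : Tendsto (fun x => Real.log x - 1 / (2 * x) - digamma x) atTop (𝓝 0) := by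
    have h := ((tendsto_inv_atTop_zero (𝕜 := ℝ)).const_mul (1 / 2)).add tendsto_digamma_sub_log
    have h' := h.neg
    simp only [mul_zero, add_zero, neg_zero] at h'
    refine h'.congr fun x => ?_
    rw [one_div, one_div, mul_inv]
    ring
  linarith [nonneg_of_add_one_le_of_tendsto_zero step hlim hx]

lemma exp_digamma_sub_le {x : ℝ} (hx : 0 < x) :
    Real.exp (digamma x) - x ≤ -(1 / (2 + x⁻¹)) := by
  have h1 : Real.exp (digamma x) ≤ x * (Real.exp (1 / (2 * x)))⁻¹ := by
    rw [← Real.exp_neg]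
    nth_rewrite 2 [← Real.exp_log hx]
    rw [← Real.exp_add, Real.exp_le_exp]
    linarith [digamma_le_log_sub hx]
  have h2 : (Real.exp (1 / (2 * x)))⁻¹ ≤ (1 / (2 * x) + 1)⁻¹ :=
    inv_anti₀ (by positivity) (Real.add_one_le_exp _)
  have h3 := mul_le_mul_of_nonneg_left h2 hx.le
  have h4 : x * (1 / (2 * x) + 1)⁻¹ - x = -(1 / (2 + x⁻¹)) := by
    field_simp
    ring
  linarith

lemma tendsto_exp_digamma_sub_atTop :
    Tendsto (fun x => Real.exp (digamma x) - x) atTop (𝓝 (-(1 / 2))) := by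
  have h : Tendsto (fun x : ℝ => -(1 / (2 + x⁻¹))) atTop (𝓝 (-(1 / 2))) := by
    have := ((tendsto_inv_atTop_zero (𝕜 := ℝ)).const_add 2).inv₀ (by norm_num)
    simpa using this.neg
  refine tendsto_of_tendsto_of_tendsto_of_le_of_le' tendsto_const_nhds h ?_ ?_
  · exact Eventually.of_forall fun x => neg_half_lt_exp_digamma_sub.le
  · filter_upwards [eventually_gt_atTop 0] with x hx using exp_digamma_sub_le hx

/-- Approximations of the digamma function: the asymptotic expression `log x - 1 / (2 x)`
transported from `x + n` back to `x` through the functional equation. -/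
noncomputable def digammaApprox : ℕ → ℝ → ℝ
  | 0, x => Real.log x - 1 / 2 * x⁻¹
  | n + 1, x => digammaApprox n (x + 1) - x⁻¹

/-- The derivative of `digammaApprox n`. -/
noncomputable def digammaApproxDeriv : ℕ → ℝ → ℝ
  | 0, x => x⁻¹ + 1 / 2 * x⁻¹ ^ 2
  | n + 1, x => digammaApproxDeriv n (x + 1) + x⁻¹ ^ 2

/-- The second derivative of `digammaApprox n`. -/
noncomputable def digammaApproxDerivTwo : ℕ → ℝ → ℝ
  | 0, x => -x⁻¹ ^ 2 - x⁻¹ ^ 3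
  | n + 1, x => digammaApproxDerivTwo n (x + 1) - 2 * x⁻¹ ^ 3

lemma hasDerivAt_digammaApprox (n : ℕ) {x : ℝ} (hx : 0 < x) :
    HasDerivAt (digammaApprox n) (digammaApproxDeriv n x) x := by
  have hinv := hasDerivAt_inv hx.ne'
  induction n generalizing x with
  | zero =>
    refine ((Real.hasDerivAt_log hx.ne').sub (hinv.const_mul (1 / 2))).congr_deriv ?_
    simp only [digammaApproxDeriv, inv_pow]
    ring
  | succ n ih =>
    have hx' : 0 < x + 1 := by linarith
    refine (((ih hx' (hasDerivAt_inv hx'.ne')).comp_add_const x 1).sub hinv).congr_deriv ?_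
    simp only [digammaApproxDeriv, inv_pow]
    ring

lemma hasDerivAt_digammaApproxDeriv (n : ℕ) {x : ℝ} (hx : 0 < x) :
    HasDerivAt (digammaApproxDeriv n) (digammaApproxDerivTwo n x) x := by
  have hinv := hasDerivAt_inv hx.ne'
  induction n generalizing x with
  | zero =>
    refine (hinv.add ((hinv.pow 2).const_mul (1 / 2))).congr_deriv ?_
    simp only [digammaApproxDerivTwo, Nat.cast_ofNat, Nat.add_one_sub_one, pow_one]
    ring
  | succ n ih =>
    have hx' : 0 < x + 1 := by linarith
    refine (((ih hx' (hasDerivAt_inv hx'.ne')).comp_add_const x 1).add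
      (hinv.pow 2)).congr_deriv ?_
    simp only [digammaApproxDerivTwo, Nat.cast_ofNat, Nat.add_one_sub_one, pow_one]
    ring

lemma le_digammaApproxDeriv (n : ℕ) {x : ℝ} (hx : 0 < x) :
    x⁻¹ + 1 / 2 * x⁻¹ ^ 2 ≤ digammaApproxDeriv n x := by
  induction n generalizing x with
  | zero => exact le_rfl
  | succ n ih =>
    have h := ih (x := x + 1) (by linarith)
    have h2 : x⁻¹ - (x + 1)⁻¹ = x⁻¹ * (x + 1)⁻¹ := by
      field_simp
      ring
    simp only [digammaApproxDeriv]
    nlinarith [sq_nonneg (x⁻¹ - (x + 1)⁻¹)]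

lemma digammaApproxDeriv_sq_add_nonneg (n : ℕ) {x : ℝ} (hx : 0 < x) :
    0 ≤ digammaApproxDeriv n x ^ 2 + digammaApproxDerivTwo n x := by
  induction n generalizing x with
  | zero =>
    simp only [digammaApproxDeriv, digammaApproxDerivTwo]
    nlinarith [sq_nonneg (x⁻¹ ^ 2)]
  | succ n ih =>
    have h := ih (x := x + 1) (by linarith)
    have h1 := le_digammaApproxDeriv (n + 1) hx
    have h2 := mul_nonneg (sq_nonneg x⁻¹) (sub_nonneg.2 h1)
    simp only [digammaApproxDeriv, digammaApproxDerivTwo] at h2 ⊢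
    nlinarith

lemma convexOn_exp_digammaApprox (n : ℕ) :
    ConvexOn ℝ (Ioi 0) (fun x => Real.exp (digammaApprox n x)) := by
  have hd : ∀ x : ℝ, 0 < x → HasDerivAt (fun x => Real.exp (digammaApprox n x))
      (Real.exp (digammaApprox n x) * digammaApproxDeriv n x) x := fun x hx =>
    (hasDerivAt_digammaApprox n hx).exp
  refine convexOn_of_hasDerivWithinAt2_nonneg (convex_Ioi 0)
    (fun x hx => (hd x hx).continuousAt.continuousWithinAt)
    (f' := fun x => Real.exp (digammaApprox n x) * digammaApproxDeriv n x)
    (f'' := fun x => Real.exp (digammaApprox n x) *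
      (digammaApproxDeriv n x ^ 2 + digammaApproxDerivTwo n x)) ?_ ?_ ?_
  all_goals
    rw [interior_Ioi]
    intro x hx
  · exact (hd x hx).hasDerivWithinAt
  · refine (((hd x hx).mul (hasDerivAt_digammaApproxDeriv n hx)).congr_deriv ?_).hasDerivWithinAt
    ring
  · exact mul_nonneg (Real.exp_pos _).le (digammaApproxDeriv_sq_add_nonneg n hx)

lemma digammaApprox_sub_digamma (n : ℕ) {x : ℝ} (hx : 0 < x) :
    digammaApprox n x - digamma x =
      Real.log (x + n) - 1 / 2 * (x + n)⁻¹ - digamma (x + n) := by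
  induction n generalizing x with
  | zero => simp [digammaApprox]
  | succ n ih =>
    have h := ih (x := x + 1) (by linarith)
    rw [digamma_add_one hx] at h
    simp only [digammaApprox]
    push_cast
    rw [show x + (n + 1 : ℝ) = x + 1 + n by ring, ← h]
    ring

lemma tendsto_digammaApprox {x : ℝ} (hx : 0 < x) :
    Tendsto (fun n => digammaApprox n x) atTop (𝓝 (digamma x)) := by
  have h := (((tendsto_inv_atTop_zero (𝕜 := ℝ)).const_mul (1 / 2)).add
    tendsto_digamma_sub_log).neg.comp
    (tendsto_atTop_add_const_left _ x tendsto_natCast_atTop_atTop)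
  have h' := h.const_add (digamma x)
  simp only [mul_zero, add_zero, neg_zero] at h'
  refine h'.congr fun n => ?_
  have := digammaApprox_sub_digamma n hx
  simp only [Function.comp_apply]
  linarith

lemma convexOn_of_tendsto {s : Set ℝ} (hs : Convex ℝ s) {F : ℕ → ℝ → ℝ} {f : ℝ → ℝ}
    (hF : ∀ n, ConvexOn ℝ s (F n))
    (hlim : ∀ x ∈ s, Tendsto (fun n => F n x) atTop (𝓝 (f x))) : ConvexOn ℝ s f := by
  refine ⟨hs, fun x hx y hy a b ha hb hab => ?_⟩
  exact le_of_tendsto_of_tendsto' (hlim _ (hs hx hy ha hb hab))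
    (((hlim x hx).const_smul a).add ((hlim y hy).const_smul b))
    fun n => (hF n).2 hx hy ha hb hab

lemma convexOn_exp_digamma : ConvexOn ℝ (Ioi 0) (fun x => Real.exp (digamma x)) :=
  convexOn_of_tendsto (convex_Ioi 0) convexOn_exp_digammaApprox
    fun _ hx => (Real.continuous_exp.tendsto _).comp (tendsto_digammaApprox hx)

lemma convexOn_exp_digamma_sub_id :
    ConvexOn ℝ (Ioi 0) (fun x => Real.exp (digamma x) - x) :=
  convexOn_exp_digamma.sub (concaveOn_id (convex_Ioi 0))

/-- A convex function on a half-line which stays above its limit at infinity is strictly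
decreasing. -/
lemma ConvexOn.strictAntiOn_of_tendsto_atTop {f : ℝ → ℝ} {a l : ℝ} (hf : ConvexOn ℝ (Ioi a) f)
    (hlim : Tendsto f atTop (𝓝 l)) (hl : ∀ x ∈ Ioi a, l < f x) : StrictAntiOn f (Ioi a) := by
  intro x hx y hy hxy
  by_contra! hle
  refine (hl y hy).not_ge (ge_of_tendsto hlim ?_)
  filter_upwards [eventually_gt_atTop y] with z hz
  have h := hf.slope_mono_adjacent hx (lt_trans hy hz) hxy hz
  have h0 : 0 ≤ (f z - f y) / (z - y) :=
    (div_nonneg (sub_nonneg.2 hle) (sub_pos.2 hxy).le).trans h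
  by_contra! hlt
  exact (div_neg_of_neg_of_pos (sub_neg.2 hlt) (sub_pos.2 hz)).not_ge h0

/-- For `t > 0` the function `x ↦ e^{ψ(x+t)} - x` is decreasing and convex on `(0, ∞)`,
tends to `e^{ψ(t)}` as `x → 0⁺` and to `t - 1/2` as `x → ∞`, and its range on `(0, ∞)`
is the open interval `(t - 1/2, e^{ψ(t)})`. -/
theorem exp_digamma_sub_id_decreasing_convex (t : ℝ) (ht : 0 < t) :
    StrictAntiOn (fun x : ℝ => Real.exp (digamma (x + t)) - x) (Set.Ioi (0 : ℝ)) ∧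
      ConvexOn ℝ (Set.Ioi (0 : ℝ)) (fun x : ℝ => Real.exp (digamma (x + t)) - x) ∧
      Tendsto (fun x : ℝ => Real.exp (digamma (x + t)) - x)
        (nhdsWithin 0 (Set.Ioi (0 : ℝ))) (nhds (Real.exp (digamma t))) ∧
      Tendsto (fun x : ℝ => Real.exp (digamma (x + t)) - x) atTop (nhds (t - 1 / 2)) ∧
      (fun x : ℝ => Real.exp (digamma (x + t)) - x) '' Set.Ioi (0 : ℝ) =
        Set.Ioo (t - 1 / 2) (Real.exp (digamma t)) := by
  set g : ℝ → ℝ := fun x => Real.exp (digamma x) - x with hg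
  have hfg : (fun x : ℝ => Real.exp (digamma (x + t)) - x) = fun x => g (x + t) + t := by
    funext x
    simp only [hg]
    ring
  have hconv : ConvexOn ℝ (Ioi 0) g := convexOn_exp_digamma_sub_id
  have hanti : StrictAntiOn g (Ioi 0) :=
    hconv.strictAntiOn_of_tendsto_atTop tendsto_exp_digamma_sub_atTop
      fun _ _ => neg_half_lt_exp_digamma_sub
  have hcont : ContinuousOn g (Ioi 0) := hconv.continuousOn isOpen_Ioi
  have hpos : ∀ x ∈ Ioi (0 : ℝ), x + t ∈ Ioi (0 : ℝ) := fun x hx => add_pos hx ht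
  have h1 : StrictAntiOn (fun x => g (x + t) + t) (Ioi 0) := fun x hx y hy hxy => by
    have := hanti (hpos x hx) (hpos y hy) (by linarith)
    simpa using this
  have h2 : ConvexOn ℝ (Ioi 0) (fun x => g (x + t) + t) :=
    ((hconv.translate_left t).subset
      (fun x hx => by simpa only [mem_preimage, add_comm] using hpos x hx) (convex_Ioi 0)).add_const t
  have h3 : Tendsto (fun x => g (x + t) + t) (𝓝[>] 0) (𝓝 (Real.exp (digamma t))) := by
    have hc : ContinuousAt g (0 + t) := by
      rw [zero_add]
      exact hcont.continuousAt (Ioi_mem_nhds ht)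
    have hc' : ContinuousAt (fun x => g (x + t) + t) 0 :=
      (hc.comp (f := fun x : ℝ => x + t) (by fun_prop)).add continuousAt_const
    have := hc'.tendsto.mono_left (nhdsWithin_le_nhds (s := Ioi 0))
    simpa [hg] using this
  have h4 : Tendsto (fun x => g (x + t) + t) atTop (𝓝 (t - 1 / 2)) := by
    have := (tendsto_exp_digamma_sub_atTop.comp
      (tendsto_atTop_add_const_right _ t tendsto_id)).add_const t
    rwa [show -(1 / 2) + t = t - 1 / 2 by ring] at this
  rw [hfg]
  refine ⟨h1, h2, h3, h4, Subset.antisymm ?_ ?_⟩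
  · rintro _ ⟨x, hx, rfl⟩
    have hlow : -(1 / 2) < g (x + t) := neg_half_lt_exp_digamma_sub
    have hup : g (x + t) < g t := hanti ht (hpos x hx) (lt_add_of_pos_left t hx)
    have hgt : g t = Real.exp (digamma t) - t := rfl
    exact ⟨by dsimp only; linarith, by dsimp only; linarith⟩
  · refine isPreconnected_Ioi.intermediate_value_Ioo (l₂ := 𝓝[>] 0)
      (le_principal_iff.2 (Ioi_mem_atTop 0)) inf_le_right ?_ h4 h3
    exact (hcont.comp (by fun_prop) hpos).add continuousOn_const
end
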